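/- arXiv:2002.06630 — 2 statements merged into one kernel-verified Lean document; each statement's English description precedes it below -/
import Mathlib

section
/- Let X and Y be simplicial complexes on the same finite vertex set V, and let M be a matroid on V (identified with the complex of its independent sets) such that Y^∨ ⊆ M ⊆ X, where Y^∨ = {A ⊆ V : V \ A ∉ Y} is the Alexander dual of Y. Then there exists a simplex σ ∈ X such that ρ_M(V \ σ) ≤ L_Y(X;F). -/
open Finset

/-- An abstract simplicial complex on the vertex type `V`: a set of finite subsets
("simplices") closed under taking subsets. -/
def IsComplex {V : Type*} (X : Set (Finset V)) : Prop :=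
  ∀ σ ∈ X, ∀ τ, τ ⊆ σ → τ ∈ X

variable {V : Type*}

/-- The induced subcomplex `X[S] = {σ ∈ X : σ ⊆ S}`. -/
def induce (X : Set (Finset V)) (S : Finset V) : Set (Finset V) :=
  {σ | σ ∈ X ∧ σ ⊆ S}

/-- The link `lk(X,τ) = {σ : σ ∪ τ ∈ X, σ ∩ τ = ∅}`; it is the void complex if `τ ∉ X`. -/
def link [DecidableEq V] (X : Set (Finset V)) (τ : Finset V) : Set (Finset V) :=
  {σ | σ ∪ τ ∈ X ∧ Disjoint σ τ}

/-- The star `str(X,τ) = {σ ∈ X : σ ∪ τ ∈ X}`. -/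
def star [DecidableEq V] (X : Set (Finset V)) (τ : Finset V) : Set (Finset V) :=
  {σ | σ ∈ X ∧ σ ∪ τ ∈ X}

/-- The Alexander dual `X^∨ = {A ⊆ V : V \ A ∉ X}` of a complex on the finite vertex set
`V`. -/
def alexDual [Fintype V] [DecidableEq V] (X : Set (Finset V)) : Set (Finset V) :=
  {A | Aᶜ ∉ X}

section Homology

variable (F : Type) [Field F]

/-- The faces of `X` of cardinality `n` (i.e. of dimension `n-1`). -/
def Face (X : Set (Finset V)) (n : ℕ) : Type _ :=
  {σ : Finset V // σ ∈ X ∧ σ.card = n}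

/-- Simplicial chains in dimension `n-1`: formal `F`-linear combinations of faces of
cardinality `n`.  Since the empty face spans the degree `n = 0` part, this yields the
*augmented* simplicial chain complex of `X`. -/
def SChain (X : Set (Finset V)) (n : ℕ) : Type _ := Face X n →₀ F

noncomputable instance (X : Set (Finset V)) (n : ℕ) : AddCommGroup (SChain F X n) :=
  Finsupp.instAddCommGroup

noncomputable instance (X : Set (Finset V)) (n : ℕ) : Module F (SChain F X n) :=
  Finsupp.module (Face X n) F

variable [LinearOrder V]

open Classical in
/-- The boundary of a face of cardinality `n+1`: the alternating sum of its codimension-one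
subfaces, with signs determined by the linear order on the vertices. -/
noncomputable def bdryElem (X : Set (Finset V)) (n : ℕ) (σ : Face X (n+1)) :
    SChain F X n :=
  ∑ x ∈ σ.1.attach,
    if h : σ.1.erase ↑x ∈ X then
      ((-1 : F) ^ ((σ.1.filter (fun y => y < (x : V))).card)) •
        (Finsupp.single (⟨σ.1.erase ↑x, h, by
          rw [Finset.card_erase_of_mem x.2, σ.2.2]; rfl⟩ : Face X n) 1 : SChain F X n)
    else 0

/-- The simplicial boundary map (in degree `0` it is the augmentation `C_0 → C_{-1} ≅ F`
encoded by `scyc`). -/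
noncomputable def sbdry (X : Set (Finset V)) (n : ℕ) :
    SChain F X (n+1) →ₗ[F] SChain F X n :=
  Finsupp.lsum F fun σ => LinearMap.toSpanSingleton F (SChain F X n) (bdryElem F X n σ)

/-- The cycles of the augmented simplicial chain complex. -/
noncomputable def scyc (X : Set (Finset V)) : (n : ℕ) → Submodule F (SChain F X n)
  | 0 => ⊤
  | (n+1) => LinearMap.ker (sbdry F X n)

/-- `RH F X n` is the reduced simplicial homology `h̃_{n-1}(X; F)` of `X` with coefficients
in `F` (faces of cardinality `n` have dimension `n-1`). -/
abbrev RH (X : Set (Finset V)) (n : ℕ) : Type _ :=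
  scyc F X n ⧸ Submodule.comap (scyc F X n).subtype (LinearMap.range (sbdry F X n))

/-- `X` is `d`-Leray over `F`: every induced subcomplex has vanishing reduced homology in
all dimensions `i ≥ d`. -/
def IsLeray (d : ℕ) (X : Set (Finset V)) : Prop :=
  ∀ S : Finset V, ∀ i : ℕ, d ≤ i → Subsingleton (RH F (induce X S) (i+1))

end Homology


/-- The rank `ρ_M(S)` of a set `S` in a matroid `M`: the maximal cardinality of an
independent subset of `S`. -/
noncomputable def matroidRank {V : Type*} (M : Matroid V) (S : Set V) : ℕ :=
  sSup {n | ∃ I : Finset V, ↑I ⊆ S ∧ M.Indep ↑I ∧ I.card = n}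

/-- The matroid `M`, identified with the simplicial complex of its independent sets. -/
def indepComplex {V : Type*} (M : Matroid V) : Set (Finset V) :=
  {σ | M.Indep ↑σ}

/-- The relative Leray number `L_Y(X; F)`: the least `d` such that
`h̃_i(X[V \ σ]; F) = 0` for all `i ≥ d` and all `σ ∈ Y`. -/
noncomputable def relLeray {V : Type*} [Fintype V] [LinearOrder V] (F : Type) [Field F]
    (X Y : Set (Finset V)) : ℕ :=
  sInf {d | ∀ σ ∈ Y, ∀ i : ℕ, d ≤ i → Subsingleton (RH F (induce X σᶜ) (i + 1))}

/-!
Write `d` for the relative Leray number and suppose that `ρ_M(V \ α) > d` for every simplex `α` of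
`X`. Splice the `d`-skeleton of `M` with the faces of `X` in higher dimensions and restrict to
`V \ α`: every cycle of the result bounds. Below dimension `d` this holds because the independence
complex of a matroid has no reduced homology below its top dimension; from dimension `d` on it holds
by the definition of `d` if `α ∈ Y`, and because `V \ α` is a simplex of `X` if `α ∉ Y`.

Acyclicity allows one to choose inductively, for every cube `[α, α ∪ T]` of faces of `X`, a chain
avoiding `α` whose boundary is the signed sum of the chains of the facets of the cube, or the empty
face if the cube is a point. Let `h` send a face `T` to the chain of `[∅, T]`. The parity operator
anticommutes with `∂`, so the supertrace of `∂h + h∂` vanishes. But this operator fixes `∅` and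
sends a face `T ≠ ∅` to a signed sum of the chains of `[{v}, T]` with `v ∈ T`, none of which
involves `T`: its supertrace is `1`, a contradiction.
-/

/-- Augmented chains of the full simplex on `V`: formal `R`-linear combinations of all finite
subsets of `V`, in all degrees at once. The chains of a complex, or of any family of faces `A`,
form the submodule `Finsupp.supported R R A`. -/
abbrev FaceChain (R V : Type*) [CommRing R] : Type _ := Finset V →₀ R

namespace FaceChain

lemma map_mem_of_mem_supported {R α N : Type*} [CommRing R] [AddCommGroup N] [Module R N]
    {f : (α →₀ R) →ₗ[R] N} {A : Set α} {p : Submodule R N}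
    (hf : ∀ a ∈ A, f (Finsupp.single a 1) ∈ p) {c : α →₀ R}
    (hc : c ∈ Finsupp.supported R R A) : f c ∈ p := by
  rw [Finsupp.supported_eq_span_single] at hc
  refine (Submodule.span_le (p := p.comap f)).2 ?_ hc
  rintro _ ⟨a, ha, rfl⟩
  exact hf a ha

variable (R : Type*) [CommRing R] [LinearOrder V]

/-- The incidence number of a face and the facet omitting its vertex `v`. It depends only on the
vertices other than `v`, so it is also the sign of adding `v` to a face not containing it. -/
def sign (v : V) (σ : Finset V) : R := (-1) ^ #{u ∈ σ | u < v}

variable {R}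

lemma sign_mul_self (v : V) (σ : Finset V) : sign R v σ * sign R v σ = 1 := by
  rw [sign, ← mul_pow, neg_one_mul, neg_neg, one_pow]

lemma sign_erase_of_le {v w : V} (h : v ≤ w) (σ : Finset V) :
    sign R v (σ.erase w) = sign R v σ := by
  rw [sign, filter_erase, erase_eq_of_notMem (by simp [h]), sign]

lemma sign_erase_of_lt {v w : V} (h : v < w) {σ : Finset V} (hv : v ∈ σ) :
    sign R w (σ.erase v) = -sign R w σ := by
  have hmem : v ∈ ({u ∈ σ | u < w} : Finset V) := by simp [hv, h]
  rw [sign, sign, filter_erase, ← card_erase_add_one hmem, pow_succ]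
  ring

lemma sign_insert_self (v : V) (σ : Finset V) : sign R v (insert v σ) = sign R v σ := by
  rw [← sign_erase_of_le le_rfl (insert v σ), erase_insert_eq_erase, sign_erase_of_le le_rfl]

lemma sign_mul_sign_erase {v w : V} (hvw : v ≠ w) {σ : Finset V} (hv : v ∈ σ) (hw : w ∈ σ) :
    sign R v σ * sign R w (σ.erase v) = -(sign R w σ * sign R v (σ.erase w)) := by
  rcases hvw.lt_or_gt with h | h
  · rw [sign_erase_of_lt h hv, sign_erase_of_le h.le]
    ring
  · rw [sign_erase_of_lt h hw, sign_erase_of_le h.le]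
    ring

lemma sign_mul_sign_insert {e v : V} (hve : v ≠ e) {σ : Finset V} (he : e ∉ σ) (hv : v ∈ σ) :
    sign R e σ * sign R v (insert e σ) = -(sign R v σ * sign R e (σ.erase v)) := by
  have h := sign_mul_sign_erase (R := R) hve.symm (mem_insert_self e σ) (mem_insert_of_mem hv)
  rw [erase_insert he, sign_insert_self, erase_insert_of_ne hve.symm, sign_insert_self] at h
  linear_combination sign R v σ * sign R v (insert e σ) * h
    - sign R e σ * sign R v (insert e σ) * sign_mul_self (R := R) v σ
    - sign R v σ * sign R e (σ.erase v) * sign_mul_self (R := R) v (insert e σ)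

lemma sum_sum_erase_sign_smul_eq_zero {A : Type*} [AddCommGroup A] [Module R A] (σ : Finset V)
    (f : V → V → A) (hf : ∀ v ∈ σ, ∀ w ∈ σ, f v w = f w v) :
    ∑ v ∈ σ, ∑ w ∈ σ.erase v, (sign R v σ * sign R w (σ.erase v)) • f v w = 0 := by
  rw [sum_sigma']
  refine sum_involution (fun p _ ↦ ⟨p.2, p.1⟩) ?_ ?_ ?_ ?_
  · rintro ⟨v, w⟩ hp
    obtain ⟨hv, hwv, hw⟩ : v ∈ σ ∧ w ≠ v ∧ w ∈ σ := by simpa using hp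
    simp only [sign_mul_sign_erase hwv.symm hv hw, hf v hv w hw, neg_smul, neg_add_cancel]
  · rintro ⟨v, w⟩ hp - heq
    have hwv : w ≠ v := by simp_all
    exact hwv (congrArg Sigma.fst heq)
  · rintro ⟨v, w⟩ hp
    simp_all [eq_comm]
  · exact fun _ _ ↦ rfl

/-- The augmented simplicial boundary; it sends a vertex to the empty face and the empty face to
`0`. -/
noncomputable def bdry : FaceChain R V →ₗ[R] FaceChain R V :=
  Finsupp.linearCombination R fun σ ↦ ∑ v ∈ σ, sign R v σ • Finsupp.single (σ.erase v) 1

lemma bdry_single (σ : Finset V) (r : R) :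
    bdry (Finsupp.single σ r) =
      r • ∑ v ∈ σ, sign R v σ • Finsupp.single (σ.erase v) (1 : R) :=
  Finsupp.linearCombination_single ..

lemma bdry_single_one (σ : Finset V) :
    bdry (Finsupp.single σ 1) = ∑ v ∈ σ, sign R v σ • Finsupp.single (σ.erase v) (1 : R) := by
  rw [bdry_single, one_smul]

lemma bdry_bdry (c : FaceChain R V) : bdry (bdry c) = 0 := by
  suffices bdry ∘ₗ bdry = (0 : FaceChain R V →ₗ[R] FaceChain R V) from LinearMap.congr_fun this c
  refine Finsupp.lhom_ext' fun σ ↦ LinearMap.ext_ring ?_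
  change bdry (bdry (Finsupp.single σ 1)) = 0
  simp only [bdry_single_one, map_sum, map_smul, smul_sum, smul_smul]
  exact sum_sum_erase_sign_smul_eq_zero σ _ fun v _ w _ ↦ by rw [erase_right_comm]

/-- The cone with apex `e`, that is, exterior multiplication by `e`: it kills the faces through
`e`. -/
noncomputable def cone (e : V) : FaceChain R V →ₗ[R] FaceChain R V :=
  Finsupp.linearCombination R fun σ ↦
    if e ∈ σ then 0 else sign R e σ • Finsupp.single (insert e σ) 1

lemma cone_single_of_mem {e : V} {σ : Finset V} (he : e ∈ σ) (r : R) :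
    cone e (Finsupp.single σ r) = 0 := by
  simp [cone, he]

lemma cone_single_of_notMem {e : V} {σ : Finset V} (he : e ∉ σ) (r : R) :
    cone e (Finsupp.single σ r) = r • sign R e σ • Finsupp.single (insert e σ) (1 : R) := by
  simp only [cone, Finsupp.linearCombination_single, if_neg he]

lemma bdry_cone_add_cone_bdry (e : V) (c : FaceChain R V) :
    bdry (cone e c) + cone e (bdry c) = c := by
  suffices bdry ∘ₗ cone e + cone e ∘ₗ bdry = (LinearMap.id : FaceChain R V →ₗ[R] FaceChain R V)
    from LinearMap.congr_fun this c
  refine Finsupp.lhom_ext' fun σ ↦ LinearMap.ext_ring ?_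
  change bdry (cone e (Finsupp.single σ 1)) + cone e (bdry (Finsupp.single σ 1)) =
    (Finsupp.single σ 1 : FaceChain R V)
  by_cases he : e ∈ σ
  · have hfacet : ∀ v ∈ σ, v ≠ e → cone e (sign R v σ • Finsupp.single (σ.erase v) (1 : R)) = 0 :=
      fun v _ hv ↦ by rw [map_smul, cone_single_of_mem (mem_erase.2 ⟨hv.symm, he⟩), smul_zero]
    rw [cone_single_of_mem he, map_zero, zero_add, bdry_single_one, map_sum,
      sum_eq_single_of_mem e he hfacet, map_smul, cone_single_of_notMem (notMem_erase e σ),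
      one_smul, smul_smul, sign_erase_of_le le_rfl, sign_mul_self, one_smul, insert_erase he]
  · have hcancel : ∀ v ∈ σ,
        sign R e σ • sign R v (insert e σ) • Finsupp.single ((insert e σ).erase v) (1 : R)
          + cone e (sign R v σ • Finsupp.single (σ.erase v) (1 : R)) = 0 := by
      intro v hv
      have hve : v ≠ e := ne_of_mem_of_not_mem hv he
      rw [map_smul, cone_single_of_notMem (fun h ↦ he (mem_of_mem_erase h)), one_smul, smul_smul,
        smul_smul, erase_insert_of_ne hve.symm, ← add_smul, sign_mul_sign_insert hve he hv,
        neg_add_cancel, zero_smul]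
    rw [cone_single_of_notMem he, one_smul, map_smul, bdry_single_one, bdry_single_one,
      sum_insert he, erase_insert he, sign_insert_self, smul_add, smul_smul, sign_mul_self,
      one_smul, map_sum, smul_sum, add_assoc, ← sum_add_distrib, sum_eq_zero hcancel, add_zero]

lemma bdry_cone_of_bdry_eq_zero (e : V) {c : FaceChain R V} (hc : bdry c = 0) :
    bdry (cone e c) = c := by
  simpa only [hc, map_zero, add_zero] using bdry_cone_add_cone_bdry e c

lemma cone_mem_supported {e : V} {A B : Set (Finset V)}
    (h : ∀ σ ∈ A, e ∉ σ → insert e σ ∈ B) {c : FaceChain R V}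
    (hc : c ∈ Finsupp.supported R R A) : cone e c ∈ Finsupp.supported R R B := by
  refine map_mem_of_mem_supported (fun σ hσ ↦ ?_) hc
  by_cases he : e ∈ σ
  · rw [cone_single_of_mem he]
    exact Submodule.zero_mem _
  · rw [cone_single_of_notMem he, one_smul]
    exact Submodule.smul_mem _ _ (Finsupp.single_mem_supported R 1 (h σ hσ he))

lemma bdry_mem_supported {A B : Set (Finset V)} (h : ∀ σ ∈ A, ∀ v ∈ σ, σ.erase v ∈ B)
    {c : FaceChain R V} (hc : c ∈ Finsupp.supported R R A) :
    bdry c ∈ Finsupp.supported R R B := by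
  refine map_mem_of_mem_supported (fun σ hσ ↦ ?_) hc
  rw [bdry_single_one]
  exact Submodule.sum_mem _ fun v hv ↦
    Submodule.smul_mem _ _ (Finsupp.single_mem_supported R 1 (h σ hσ v hv))

lemma exists_eq_add_cone (e : V) {A : Set (Finset V)} {c : FaceChain R V}
    (hc : c ∈ Finsupp.supported R R A) :
    ∃ a ∈ Finsupp.supported R R {σ ∈ A | e ∉ σ},
      ∃ b ∈ Finsupp.supported R R {σ | e ∉ σ ∧ insert e σ ∈ A}, c = a + cone e b := by
  rw [Finsupp.supported_eq_span_single] at hc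
  induction hc using Submodule.span_induction with
  | mem _ h =>
    obtain ⟨σ, hσ, rfl⟩ := h
    by_cases he : e ∈ σ
    · refine ⟨0, Submodule.zero_mem _, sign R e σ • Finsupp.single (σ.erase e) 1,
        Submodule.smul_mem _ _ (Finsupp.single_mem_supported R 1 ⟨notMem_erase e σ, ?_⟩), ?_⟩
      · rwa [insert_erase he]
      · rw [map_smul, cone_single_of_notMem (notMem_erase e σ), one_smul, smul_smul,
          sign_erase_of_le le_rfl, sign_mul_self, one_smul, insert_erase he, zero_add]
    · exact ⟨Finsupp.single σ 1, Finsupp.single_mem_supported R 1 ⟨hσ, he⟩, 0,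
        Submodule.zero_mem _, by rw [map_zero, add_zero]⟩
  | zero => exact ⟨0, Submodule.zero_mem _, 0, Submodule.zero_mem _, by rw [map_zero, add_zero]⟩
  | add _ _ _ _ h₁ h₂ =>
    obtain ⟨a₁, ha₁, b₁, hb₁, rfl⟩ := h₁
    obtain ⟨a₂, ha₂, b₂, hb₂, rfl⟩ := h₂
    exact ⟨a₁ + a₂, Submodule.add_mem _ ha₁ ha₂, b₁ + b₂, Submodule.add_mem _ hb₁ hb₂,
      by rw [map_add, add_add_add_comm]⟩
  | smul r _ _ h =>
    obtain ⟨a, ha, b, hb, rfl⟩ := h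
    exact ⟨r • a, Submodule.smul_mem _ r ha, r • b, Submodule.smul_mem _ r hb,
      by rw [map_smul, smul_add]⟩

end FaceChain

open FaceChain

section CyclesBound

/-- Every cycle supported on the faces `A` is the boundary of a chain supported on the faces `B`.
When `A` and `B` are the `n`- and `(n + 1)`-element faces of a complex, this is the vanishing of
its reduced homology in dimension `n - 1`. -/
def CyclesBound (R : Type*) [CommRing R] [LinearOrder V] (A B : Set (Finset V)) : Prop :=
  ∀ z ∈ Finsupp.supported R R A, bdry z = 0 → ∃ w ∈ Finsupp.supported R R B, bdry w = z

variable {R : Type*} [CommRing R] [LinearOrder V]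

lemma CyclesBound.mono {A A' B B' : Set (Finset V)} (h : CyclesBound R A B) (hA : A' ⊆ A)
    (hB : B ⊆ B') : CyclesBound R A' B' := fun z hz hz0 ↦
  let ⟨w, hw, hwz⟩ := h z (Finsupp.supported_mono hA hz) hz0
  ⟨w, Finsupp.supported_mono hB hw, hwz⟩

lemma CyclesBound.of_insert_mem (e : V) {A B : Set (Finset V)}
    (h : ∀ σ ∈ A, e ∉ σ → insert e σ ∈ B) : CyclesBound R A B := fun z hz hz0 ↦
  ⟨cone e z, cone_mem_supported h hz, bdry_cone_of_bdry_eq_zero e hz0⟩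

/-- A cycle `z = a + e ∧ b` has `b = -∂a`, so `b` is a cycle of the link of `e`. Filling it by
`b'` and then filling the cycle `a + b'` of the deletion fills `z`. -/
lemma CyclesBound.of_deletion_of_link (e : V) {A B : Set (Finset V)}
    (hAB : ∀ σ, e ∉ σ → insert e σ ∈ B → σ ∈ A)
    (hdel : CyclesBound R {σ ∈ A | e ∉ σ} {σ ∈ B | e ∉ σ})
    (hlink : CyclesBound R {σ | e ∉ σ ∧ insert e σ ∈ A} {σ | e ∉ σ ∧ insert e σ ∈ B}) :
    CyclesBound R A B := by
  intro z hz hz0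
  obtain ⟨a, ha, b, hb, rfl⟩ := exists_eq_add_cone e hz
  have hab : bdry a + b = 0 := by
    have hsplit : bdry a + b = cone e (bdry b) := calc
      bdry a + b = bdry a + (bdry (cone e b) + cone e (bdry b)) := by
        rw [bdry_cone_add_cone_bdry]
      _ = bdry (a + cone e b) + cone e (bdry b) := by rw [map_add, add_assoc]
      _ = cone e (bdry b) := by rw [hz0, zero_add]
    have havoid : bdry a + b ∈ Finsupp.supported R R {σ | e ∉ σ} :=
      Submodule.add_mem _
        (bdry_mem_supported (fun σ hσ v _ hv ↦ hσ.2 (mem_of_mem_erase hv)) ha)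
        (Finsupp.supported_mono (fun σ hσ ↦ hσ.1) hb)
    have hthrough : bdry a + b ∈ Finsupp.supported R R {σ | e ∈ σ} :=
      hsplit ▸ cone_mem_supported (A := Set.univ) (fun σ _ _ ↦ mem_insert_self e σ)
        (by rw [Finsupp.supported_univ]; exact Submodule.mem_top)
    exact Submodule.disjoint_def.1 (Finsupp.disjoint_supported_supported
      (Set.disjoint_left.2 fun (σ : Finset V) (h : e ∉ σ) h' ↦ h h')) _ havoid hthrough
  have hb0 : bdry b = 0 := by
    rw [eq_neg_of_add_eq_zero_right hab, map_neg, bdry_bdry, neg_zero]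
  obtain ⟨b', hb', hbb'⟩ := hlink b hb hb0
  have hsub : {σ | e ∉ σ ∧ insert e σ ∈ B} ⊆ {σ ∈ A | e ∉ σ} :=
    fun σ hσ ↦ ⟨hAB σ hσ.1 hσ.2, hσ.1⟩
  have hab' : a + b' ∈ Finsupp.supported R R {σ ∈ A | e ∉ σ} :=
    Submodule.add_mem _ ha (Finsupp.supported_mono hsub hb')
  obtain ⟨w, hw, hwz⟩ := hdel (a + b') hab' (by rw [map_add, hbb', hab])
  refine ⟨w - cone e b', Submodule.sub_mem _ (Finsupp.supported_mono (fun σ hσ ↦ hσ.1) hw)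
    (cone_mem_supported (fun σ hσ _ ↦ hσ.2) hb'), ?_⟩
  have hcone : bdry (cone e b') = b' - cone e b :=
    eq_sub_of_add_eq (hbb' ▸ bdry_cone_add_cone_bdry e b')
  rw [map_sub, hwz, hcone]
  abel

end CyclesBound

/-- The `n`-element faces of `X`, that is, those of dimension `n - 1`. Coercing it to a type gives
`Face X n`. -/
def faceSet (X : Set (Finset V)) (n : ℕ) : Set (Finset V) := {σ | σ ∈ X ∧ #σ = n}

open scoped Matroid

lemma eRank_le_eRank_deleteElem {M : Matroid V} {e : V} (he : ¬ M.IsColoop e) :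
    M.eRank ≤ (M ＼ {e}).eRank := by
  obtain ⟨B, hB, heB⟩ : ∃ B, M.IsBase B ∧ e ∉ B := by
    simpa only [Matroid.isColoop_iff_forall_mem_isBase, not_forall, exists_prop] using he
  rw [← hB.encard_eq_eRank]
  exact (Matroid.deleteElem_indep_iff.2 ⟨hB.indep, heB⟩).encard_le_eRank

lemma eRank_le_eRank_contractElem_add_one {M : Matroid V} {e : V} (he : M.IsNonloop e) :
    M.eRank ≤ (M ／ {e}).eRank + 1 := by
  obtain ⟨B, hB, heB⟩ := he.indep.exists_isBase_superset
  rw [← hB.encard_eq_eRank, ← Set.encard_sdiff_singleton_add_one (Set.singleton_subset_iff.1 heB)]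
  gcongr
  exact (hB.indep.diff_indep_contract_of_subset heB).encard_le_eRank

lemma faceSet_indepComplex_deleteElem (M : Matroid V) (e : V) (n : ℕ) :
    faceSet (indepComplex (M ＼ {e})) n = {σ ∈ faceSet (indepComplex M) n | e ∉ σ} := by
  ext σ
  change (M ＼ {e}).Indep ↑σ ∧ #σ = n ↔ (M.Indep ↑σ ∧ #σ = n) ∧ e ∉ σ
  rw [Matroid.deleteElem_indep_iff, mem_coe]
  tauto

lemma faceSet_indepComplex_contractElem [DecidableEq V] {M : Matroid V} {e : V} (he : M.IsNonloop e)
    (n : ℕ) :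
    faceSet (indepComplex (M ／ {e})) n =
      {σ | e ∉ σ ∧ insert e σ ∈ faceSet (indepComplex M) (n + 1)} := by
  ext σ
  change (M ／ {e}).Indep ↑σ ∧ #σ = n ↔ e ∉ σ ∧ M.Indep ↑(insert e σ) ∧ #(insert e σ) = n + 1
  rw [he.contractElem_indep_iff, mem_coe, coe_insert, and_assoc]
  refine and_congr_right fun heσ ↦ ?_
  rw [card_insert_of_notMem heσ, Nat.add_right_cancel_iff]

section MatroidHomology

variable {R : Type*} [CommRing R] [LinearOrder V]

theorem cyclesBound_indepComplex (M : Matroid V) [M.Finite] (k : ℕ) (hk : k < M.eRank) :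
    CyclesBound R (faceSet (indepComplex M) k) (faceSet (indepComplex M) (k + 1)) := by
  induction hn : M.E.ncard using Nat.strong_induction_on generalizing M k with
  | h n ih =>
    obtain ⟨B, hB⟩ := M.exists_isBase
    obtain ⟨e, heB⟩ : B.Nonempty := by
      rw [← Set.encard_ne_zero, hB.encard_eq_eRank]
      exact (zero_le.trans_lt hk).ne'
    have he : M.IsNonloop e := hB.indep.isNonloop_of_mem heB
    have hcard : (M.E \ {e}).ncard < n :=
      hn ▸ Set.ncard_sdiff_singleton_lt_of_mem he.mem_ground M.ground_finite
    by_cases hcoloop : M.IsColoop e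
    · refine .of_insert_mem e fun σ hσ heσ ↦ ⟨?_, by rw [card_insert_of_notMem heσ, hσ.2]⟩
      change M.Indep ↑(insert e σ)
      rw [coe_insert]
      exact hcoloop.insert_indep_of_indep hσ.1
    have hdel := ih _ hcard (M ＼ {e}) k (hk.trans_le (eRank_le_eRank_deleteElem hcoloop)) rfl
    rw [faceSet_indepComplex_deleteElem, faceSet_indepComplex_deleteElem] at hdel
    obtain - | k := k
    · refine .of_insert_mem e fun σ hσ heσ ↦ ⟨?_, by rw [card_insert_of_notMem heσ, hσ.2]⟩
      change M.Indep ↑(insert e σ)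
      rw [card_eq_zero.1 hσ.2, coe_insert, coe_empty, insert_empty_eq]
      exact he.indep
    have hlink := ih _ hcard (M ／ {e}) k
      (by simpa using hk.trans_le (eRank_le_eRank_contractElem_add_one he)) rfl
    rw [faceSet_indepComplex_contractElem he, faceSet_indepComplex_contractElem he] at hlink
    refine .of_deletion_of_link e (fun σ heσ hσ ↦ ⟨?_, ?_⟩) hdel hlink
    · exact Matroid.Indep.subset hσ.1 (coe_subset.2 (subset_insert e σ))
    · simpa [card_insert_of_notMem heσ] using hσ.2

theorem cyclesBound_induce_indepComplex (M : Matroid V) {S : Finset V} {k : ℕ}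
    (hk : k < M.eRk S) :
    CyclesBound R (faceSet (induce (indepComplex M) S) k)
      (faceSet (induce (indepComplex M) S) (k + 1)) := by
  have hfinite : (M ↾ (S : Set V)).Finite := Matroid.restrict_finite S.finite_toSet
  have hres : induce (indepComplex M) S = indepComplex (M ↾ (S : Set V)) := by
    ext σ
    change M.Indep ↑σ ∧ σ ⊆ S ↔ (M ↾ (S : Set V)).Indep ↑σ
    rw [Matroid.restrict_indep_iff, coe_subset]
  rw [hres]
  exact cyclesBound_indepComplex _ k hk

end MatroidHomology

lemma lt_eRk_of_lt_matroidRank {M : Matroid V} {S : Set V} {n : ℕ} (h : n < matroidRank M S) :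
    n < M.eRk S := by
  have hne : {m | ∃ I : Finset V, ↑I ⊆ S ∧ M.Indep ↑I ∧ #I = m}.Nonempty :=
    ⟨0, ∅, by simp, by simp, card_empty⟩
  obtain ⟨_, ⟨I, hIS, hI, rfl⟩, hn⟩ := exists_lt_of_lt_csSup hne h
  calc (n : ℕ∞) < #I := by exact_mod_cast hn
    _ = (I : Set V).encard := (Set.encard_coe_eq_coe_finsetCard I).symm
    _ ≤ M.eRk S := hI.encard_le_eRk_of_subset hIS

section Trace

lemma trace_eq_sum_single {R α : Type*} [CommRing R] [Fintype α] (f : Module.End R (α →₀ R)) :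
    LinearMap.trace R (α →₀ R) f = ∑ a, f (Finsupp.single a 1) a := by
  classical
  rw [LinearMap.trace_eq_matrix_trace R Finsupp.basisSingleOne]
  simp only [Matrix.trace, Matrix.diag_apply, LinearMap.toMatrix_apply,
    Finsupp.coe_basisSingleOne, Finsupp.basisSingleOne_repr, LinearEquiv.refl_apply]

lemma trace_mul_anticommutator_eq_zero {R N : Type*} [CommRing R] [AddCommGroup N] [Module R N]
    {ε D : Module.End R N} (hεD : ε * D = -(D * ε)) (h : Module.End R N) :
    LinearMap.trace R N (ε * (D * h + h * D)) = 0 := by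
  rw [mul_add, ← mul_assoc, hεD, neg_mul, map_add, map_neg, mul_assoc, LinearMap.trace_mul_comm,
    mul_assoc, neg_add_cancel]

end Trace

namespace FaceChain

/-- The grading involution, multiplying an `n`-element face by `(-1) ^ n`. -/
noncomputable def parity {R V : Type*} [CommRing R] : Module.End R (FaceChain R V) :=
  Finsupp.linearCombination R fun σ ↦ (-1 : R) ^ #σ • Finsupp.single σ 1

lemma parity_single {R V : Type*} [CommRing R] (σ : Finset V) (r : R) :
    parity (Finsupp.single σ r) = r • (-1 : R) ^ #σ • Finsupp.single σ (1 : R) :=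
  Finsupp.linearCombination_single ..

lemma parity_apply {R V : Type*} [CommRing R] (c : FaceChain R V) (σ : Finset V) :
    parity c σ = (-1) ^ #σ * c σ := by
  classical
  induction c using Finsupp.induction_linear with
  | zero => rw [map_zero, Finsupp.zero_apply, mul_zero]
  | add _ _ h₁ h₂ => rw [map_add, Finsupp.add_apply, Finsupp.add_apply, h₁, h₂, mul_add]
  | single τ r =>
    rw [parity_single, Finsupp.smul_apply, Finsupp.smul_apply, Finsupp.single_apply,
      Finsupp.single_apply]
    split_ifs with hτ
    · rw [hτ, smul_eq_mul, smul_eq_mul, mul_one, mul_comm]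
    · rw [smul_zero, smul_zero, mul_zero]

lemma parity_mul_bdry {R : Type*} [CommRing R] [LinearOrder V] :
    parity * bdry = -(bdry * parity : Module.End R (FaceChain R V)) := by
  refine Finsupp.lhom_ext' fun σ ↦ LinearMap.ext_ring ?_
  change parity (bdry (Finsupp.single σ 1)) = -bdry (parity (Finsupp.single σ 1))
  simp only [bdry_single_one, parity_single, map_sum, map_smul, smul_sum, smul_smul,
    ← sum_neg_distrib, ← neg_smul]
  refine sum_congr rfl fun v hv ↦ congrArg (· • _) ?_
  rw [← card_erase_add_one hv]
  ring

lemma sum_neg_one_pow_card_mul_diag_eq_zero {R : Type*} [CommRing R] [LinearOrder V] [Fintype V]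
    (h : Module.End R (FaceChain R V)) :
    ∑ σ, (-1) ^ #σ *
      (bdry (h (Finsupp.single σ 1)) + h (bdry (Finsupp.single σ 1)) : FaceChain R V) σ = 0 := by
  rw [← trace_mul_anticommutator_eq_zero parity_mul_bdry h, trace_eq_sum_single]
  exact sum_congr rfl fun σ _ ↦ (parity_apply _ σ).symm

end FaceChain

section CubeChains

variable {R : Type*} [CommRing R] [LinearOrder V]

/-- The prescribed boundary of a chain `g α T` assigned to the cube `[α, α ∪ T]` of the face poset:
the signed sum of the chains of its facets, and the empty face if the cube is a point. -/
noncomputable def cubeBdry (g : Finset V → Finset V → FaceChain R V) (α T : Finset V) :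
    FaceChain R V :=
  (if T = ∅ then Finsupp.single ∅ 1 else 0) +
    ∑ v ∈ T, sign R v T • (g (insert v α) (T.erase v) - g α (T.erase v))

lemma cubeBdry_sub_cubeBdry (g : Finset V → Finset V → FaceChain R V) (α β T : Finset V) :
    cubeBdry g β T - cubeBdry g α T = ∑ v ∈ T, sign R v T •
      (g (insert v β) (T.erase v) - g β (T.erase v) -
        (g (insert v α) (T.erase v) - g α (T.erase v))) := by
  simp only [cubeBdry, add_sub_add_left_eq_sub, ← sum_sub_distrib, ← smul_sub]

lemma cubeBdry_empty_add_sum (g : Finset V → Finset V → FaceChain R V) (T : Finset V) :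
    cubeBdry g ∅ T + ∑ v ∈ T, sign R v T • g ∅ (T.erase v) =
      (if T = ∅ then Finsupp.single ∅ 1 else 0) + ∑ v ∈ T, sign R v T • g {v} (T.erase v) := by
  simp only [cubeBdry, add_assoc, ← sum_add_distrib, ← smul_add, sub_add_cancel, insert_empty_eq]

lemma bdry_cubeBdry {g : Finset V → Finset V → FaceChain R V} {α T : Finset V}
    (hlower : ∀ v ∈ T, bdry (g α (T.erase v)) = cubeBdry g α (T.erase v))
    (hupper : ∀ v ∈ T, bdry (g (insert v α) (T.erase v)) = cubeBdry g (insert v α) (T.erase v)) :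
    bdry (cubeBdry g α T) = 0 := by
  have hpoint : bdry (if T = ∅ then Finsupp.single ∅ 1 else 0 : FaceChain R V) = 0 := by
    split_ifs
    · rw [bdry_single_one, sum_empty]
    · exact map_zero _
  calc bdry (cubeBdry g α T)
    _ = ∑ v ∈ T, sign R v T •
          (cubeBdry g (insert v α) (T.erase v) - cubeBdry g α (T.erase v)) := by
      rw [cubeBdry, map_add, hpoint, zero_add, map_sum]
      exact sum_congr rfl fun v hv ↦ by rw [map_smul, map_sub, hupper v hv, hlower v hv]
    _ = ∑ v ∈ T, ∑ w ∈ T.erase v, (sign R v T * sign R w (T.erase v)) •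
          (g (insert w (insert v α)) ((T.erase v).erase w) -
            g (insert v α) ((T.erase v).erase w) -
            (g (insert w α) ((T.erase v).erase w) - g α ((T.erase v).erase w))) := by
      simp only [cubeBdry_sub_cubeBdry, smul_sum, smul_smul]
    _ = 0 := sum_sum_erase_sign_smul_eq_zero T _ fun v _ w _ ↦ by
      rw [insert_comm w v, erase_right_comm]
      abel

/-- The chains obtained by filling the boundaries of cubes one dimension after the other, where
`fill α n z` is used as the filling of a boundary `z` of `n`-element faces. -/
noncomputable def cubeChain (fill : Finset V → ℕ → FaceChain R V → FaceChain R V)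
    (α T : Finset V) : FaceChain R V :=
  fill α #T ((if T = ∅ then Finsupp.single ∅ 1 else 0) + ∑ v ∈ T.attach, sign R v.1 T •
    (cubeChain fill (insert v.1 α) (T.erase v) - cubeChain fill α (T.erase v)))
termination_by #T
decreasing_by all_goals exact card_erase_lt_of_mem v.2

lemma cubeChain_eq (fill : Finset V → ℕ → FaceChain R V → FaceChain R V) (α T : Finset V) :
    cubeChain fill α T = fill α #T (cubeBdry (cubeChain fill) α T) := by
  rw [cubeChain, cubeBdry, sum_attach T fun v ↦
    sign R v T • (cubeChain fill (insert v α) (T.erase v) - cubeChain fill α (T.erase v))]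

end CubeChains

section CubeHomotopy

variable {R : Type*} [CommRing R]

open Classical in
/-- The linear map sending a face `T` of `X` to the chain of the cube `[∅, T]`, and the other faces
to `0`. -/
noncomputable def cubeHomotopy (X : Set (Finset V)) (g : Finset V → Finset V → FaceChain R V) :
    Module.End R (FaceChain R V) :=
  Finsupp.linearCombination R fun T ↦ if T ∈ X then g ∅ T else 0

lemma cubeHomotopy_single_of_mem {X : Set (Finset V)} {T : Finset V} (hT : T ∈ X)
    (g : Finset V → Finset V → FaceChain R V) :
    cubeHomotopy X g (Finsupp.single T 1) = g ∅ T := by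
  rw [cubeHomotopy, Finsupp.linearCombination_single, one_smul, if_pos hT]

lemma cubeHomotopy_single_of_notMem {X : Set (Finset V)} {T : Finset V} (hT : T ∉ X)
    (g : Finset V → Finset V → FaceChain R V) :
    cubeHomotopy X g (Finsupp.single T 1) = 0 := by
  rw [cubeHomotopy, Finsupp.linearCombination_single, one_smul, if_neg hT]

variable [LinearOrder V]

lemma cubeHomotopy_diag_of_mem {X : Set (Finset V)} (hX : IsComplex X) {τ : Finset V} (hτ : τ ∈ X)
    {g : Finset V → Finset V → FaceChain R V} (hbdry : bdry (g ∅ τ) = cubeBdry g ∅ τ)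
    (hvertex : ∀ v ∈ τ, g {v} (τ.erase v) τ = 0) :
    (bdry (cubeHomotopy X g (Finsupp.single τ 1)) +
      cubeHomotopy X g (bdry (Finsupp.single τ 1))) τ = if τ = ∅ then 1 else 0 := by
  have hfacets : cubeHomotopy X g (bdry (Finsupp.single τ 1)) =
      ∑ v ∈ τ, sign R v τ • g ∅ (τ.erase v) := by
    rw [bdry_single_one, map_sum]
    exact sum_congr rfl fun v _ ↦ by
      rw [map_smul, cubeHomotopy_single_of_mem (hX τ hτ _ (erase_subset v τ))]
  have hsum : ∑ v ∈ τ, (sign R v τ • g {v} (τ.erase v)) τ = 0 :=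
    sum_eq_zero fun v hv ↦ by rw [Finsupp.smul_apply, hvertex v hv, smul_zero]
  rw [cubeHomotopy_single_of_mem hτ, hbdry, hfacets, cubeBdry_empty_add_sum, Finsupp.add_apply,
    Finsupp.finsetSum_apply, hsum, add_zero]
  split_ifs with hempty
  · rw [hempty, Finsupp.single_eq_same]
  · rfl

lemma cubeHomotopy_diag_of_notMem {X : Set (Finset V)} {τ : Finset V} (hτ : τ ∉ X)
    {g : Finset V → Finset V → FaceChain R V} (hg : ∀ T ∈ X, g ∅ T τ = 0) :
    (bdry (cubeHomotopy X g (Finsupp.single τ 1)) +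
      cubeHomotopy X g (bdry (Finsupp.single τ 1))) τ = 0 := by
  rw [cubeHomotopy_single_of_notMem hτ, map_zero, zero_add, bdry_single_one, map_sum,
    Finsupp.finsetSum_apply]
  refine sum_eq_zero fun v _ ↦ ?_
  rw [map_smul, Finsupp.smul_apply]
  by_cases hv : τ.erase v ∈ X
  · rw [cubeHomotopy_single_of_mem hv, hg _ hv, smul_zero]
  · rw [cubeHomotopy_single_of_notMem hv, Finsupp.zero_apply, smul_zero]

end CubeHomotopy

section AcyclicCarrier

/-- A family of graded sets of faces of `X`, to be thought of as subcomplexes `P α` with `P α n`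
their `n`-element faces, which decreases with `α` and is acyclic for every face `α` of `X`. -/
structure IsAcyclicCarrier (R : Type*) [CommRing R] [LinearOrder V] (X : Set (Finset V))
    (P : Finset V → ℕ → Set (Finset V)) : Prop where
  subset : ∀ α n, P α n ⊆ X
  antitone : Antitone P
  empty_mem : ∀ α ∈ X, ∅ ∈ P α 0
  cyclesBound : ∀ α ∈ X, ∀ n, CyclesBound R (P α n) (P α (n + 1))

namespace IsAcyclicCarrier

variable {R : Type*} [CommRing R] [LinearOrder V] {X : Set (Finset V)}
  {P : Finset V → ℕ → Set (Finset V)}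

lemma cubeBdry_mem_supported (hP : IsAcyclicCarrier R X P)
    {g : Finset V → Finset V → FaceChain R V} {α T : Finset V} (hα : α ∈ X)
    (hlower : ∀ v ∈ T, g α (T.erase v) ∈ Finsupp.supported R R (P α #T))
    (hupper : ∀ v ∈ T, g (insert v α) (T.erase v) ∈ Finsupp.supported R R (P (insert v α) #T)) :
    cubeBdry g α T ∈ Finsupp.supported R R (P α #T) := by
  have hpoint : (if T = ∅ then Finsupp.single ∅ 1 else 0) ∈ Finsupp.supported R R (P α #T) := by
    split_ifs with hT
    · rw [hT, card_empty]
      exact Finsupp.single_mem_supported R 1 (hP.empty_mem α hα)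
    · exact Submodule.zero_mem _
  refine Submodule.add_mem _ hpoint (Submodule.sum_mem _ fun v hv ↦
    Submodule.smul_mem _ _ (Submodule.sub_mem _ ?_ (hlower v hv)))
  exact Finsupp.supported_mono (hP.antitone (subset_insert v α) _) (hupper v hv)

theorem exists_bdry_eq_cubeBdry (hP : IsAcyclicCarrier R X P) (hX : IsComplex X) :
    ∃ g : Finset V → Finset V → FaceChain R V, ∀ α T, Disjoint α T → α ∪ T ∈ X →
      g α T ∈ Finsupp.supported R R (P α (#T + 1)) ∧ bdry (g α T) = cubeBdry g α T := by
  have hfill : ∀ α ∈ X, ∀ n, ∀ z ∈ Finsupp.supported R R (P α n), bdry z = 0 →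
      ∃ w ∈ Finsupp.supported R R (P α (n + 1)), bdry w = z := hP.cyclesBound
  choose! fill hfill_mem hfill_bdry using hfill
  refine ⟨cubeChain fill, fun α T ↦ ?_⟩
  induction hn : #T using Nat.strong_induction_on generalizing α T with
  | h n ih =>
    subst hn
    intro hαT hαTX
    have hlower : ∀ v ∈ T, cubeChain fill α (T.erase v) ∈ Finsupp.supported R R (P α #T) ∧
        bdry (cubeChain fill α (T.erase v)) = cubeBdry (cubeChain fill) α (T.erase v) := by
      intro v hv
      rw [← card_erase_add_one hv]
      exact ih _ (card_erase_lt_of_mem hv) α _ rfl (hαT.mono_right (erase_subset v T))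
        (hX _ hαTX _ (union_subset_union_right (erase_subset v T)))
    have hupper : ∀ v ∈ T, cubeChain fill (insert v α) (T.erase v) ∈
          Finsupp.supported R R (P (insert v α) #T) ∧
        bdry (cubeChain fill (insert v α) (T.erase v)) =
          cubeBdry (cubeChain fill) (insert v α) (T.erase v) := by
      intro v hv
      rw [← card_erase_add_one hv]
      refine ih _ (card_erase_lt_of_mem hv) _ _ rfl (disjoint_insert_left.2
        ⟨notMem_erase v T, hαT.mono_right (erase_subset v T)⟩) ?_
      rwa [insert_union, ← union_insert, insert_erase hv]
    have hα : α ∈ X := hX _ hαTX _ subset_union_left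
    have hmem := hP.cubeBdry_mem_supported hα (fun v hv ↦ (hlower v hv).1)
      (fun v hv ↦ (hupper v hv).1)
    have hcycle := bdry_cubeBdry (fun v hv ↦ (hlower v hv).2) (fun v hv ↦ (hupper v hv).2)
    rw [cubeChain_eq]
    exact ⟨hfill_mem α hα _ _ hmem hcycle, hfill_bdry α hα _ _ hmem hcycle⟩

theorem exists_mem_singleton [Nontrivial R] [Finite V] (hP : IsAcyclicCarrier R X P)
    (hX : IsComplex X) (hempty : ∅ ∈ X) : ∃ v n, ∃ ρ ∈ P {v} n, v ∈ ρ := by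
  by_contra! hfree
  cases nonempty_fintype V
  obtain ⟨g, hg⟩ := hP.exists_bdry_eq_cubeBdry hX
  have hpoint : ∀ T ∈ X, ∀ ρ ∉ X, g ∅ T ρ = 0 := by
    intro T hT ρ hρ
    have hmem := (hg ∅ T (disjoint_empty_left T) (by rwa [empty_union])).1
    exact Finsupp.notMem_support_iff.1 fun hsupp ↦ hρ (hP.subset _ _ (hmem hsupp))
  have hvertex : ∀ τ ∈ X, ∀ v ∈ τ, g {v} (τ.erase v) τ = 0 := by
    intro τ hτ v hv
    have hmem := (hg {v} (τ.erase v) (disjoint_singleton_left.2 (notMem_erase v τ))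
      (by rwa [singleton_union, insert_erase hv])).1
    exact Finsupp.notMem_support_iff.1 fun hsupp ↦ hfree v _ τ (hmem hsupp) hv
  have hdiag : ∀ τ, (bdry (cubeHomotopy X g (Finsupp.single τ 1)) +
      cubeHomotopy X g (bdry (Finsupp.single τ 1))) τ = if τ = ∅ then 1 else 0 := by
    intro τ
    by_cases hτ : τ ∈ X
    · exact cubeHomotopy_diag_of_mem hX hτ
        (hg ∅ τ (disjoint_empty_left τ) (by rwa [empty_union])).2 (hvertex τ hτ)
    · rw [cubeHomotopy_diag_of_notMem hτ fun T hT ↦ hpoint T hT τ hτ,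
        if_neg (ne_of_mem_of_not_mem hempty hτ).symm]
  have hsupertrace := sum_neg_one_pow_card_mul_diag_eq_zero (cubeHomotopy X g)
  simp [hdiag] at hsupertrace

end IsAcyclicCarrier

end AcyclicCarrier

section Homology

variable {F : Type} [Field F] {K : Set (Finset V)} {n : ℕ}

/-- The inclusion of the simplicial chains of `K` supported on `n`-element faces into the chains of
the full simplex. -/
noncomputable def SChain.toFaceChain (F : Type) [Field F] (K : Set (Finset V)) (n : ℕ) :
    SChain F K n →ₗ[F] FaceChain F V :=
  Finsupp.lmapDomain F F fun σ : Face K n ↦ σ.1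

lemma SChain.toFaceChain_injective : Function.Injective (SChain.toFaceChain F K n) :=
  Finsupp.mapDomain_injective Subtype.val_injective

lemma SChain.range_toFaceChain :
    LinearMap.range (SChain.toFaceChain F K n) = Finsupp.supported F F (faceSet K n) := by
  rw [← Subtype.range_coe (s := faceSet K n), ← Set.image_univ, ← Finsupp.lmapDomain_supported,
    Finsupp.supported_univ, Submodule.map_top]
  rfl

lemma SChain.toFaceChain_single (σ : Face K n) (r : F) :
    SChain.toFaceChain F K n (Finsupp.single σ r : Face K n →₀ F) = Finsupp.single σ.1 r :=
  Finsupp.mapDomain_single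

variable [LinearOrder V]

lemma SChain.toFaceChain_sbdry (hK : IsComplex K) (c : SChain F K (n + 1)) :
    SChain.toFaceChain F K n (sbdry F K n c) = bdry (SChain.toFaceChain F K (n + 1) c) := by
  suffices SChain.toFaceChain F K n ∘ₗ sbdry F K n = bdry ∘ₗ SChain.toFaceChain F K (n + 1) from
    LinearMap.congr_fun this c
  refine Finsupp.lhom_ext' fun σ ↦ LinearMap.ext_ring ?_
  change SChain.toFaceChain F K n (sbdry F K n (Finsupp.single σ 1 : Face K (n + 1) →₀ F)) =
    bdry (SChain.toFaceChain F K (n + 1) (Finsupp.single σ 1 : Face K (n + 1) →₀ F))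
  have hsingle : sbdry F K n (Finsupp.single σ 1 : Face K (n + 1) →₀ F) = bdryElem F K n σ :=
    (Finsupp.lsum_single ..).trans (one_smul F _)
  rw [hsingle, SChain.toFaceChain_single, bdry_single_one, bdryElem, map_sum, ← sum_attach σ.1]
  refine sum_congr rfl fun v _ ↦ ?_
  refine (congrArg _ (dif_pos (hK _ σ.2.1 _ (erase_subset v.1 σ.1)))).trans ?_
  exact (map_smul _ _ _).trans (congrArg (sign F v.1 σ.1 • ·) (SChain.toFaceChain_single _ _))

lemma cyclesBound_of_subsingleton_RH (hK : IsComplex K) (h : Subsingleton (RH F K (n + 1))) :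
    CyclesBound F (faceSet K (n + 1)) (faceSet K (n + 2)) := by
  intro z hz hz0
  rw [← SChain.range_toFaceChain] at hz ⊢
  obtain ⟨c, rfl⟩ := hz
  have hc : c ∈ scyc F K (n + 1) := LinearMap.mem_ker.2 <| SChain.toFaceChain_injective <| by
    rw [SChain.toFaceChain_sbdry hK, hz0, map_zero]
  have hbound : (⟨c, hc⟩ : scyc F K (n + 1)) ∈
      (LinearMap.range (sbdry F K (n + 1))).comap (scyc F K (n + 1)).subtype := by
    rw [Submodule.Quotient.subsingleton_iff.1 h]
    exact Submodule.mem_top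
  obtain ⟨w, hw⟩ := hbound
  exact ⟨_, ⟨w, rfl⟩, by rw [← SChain.toFaceChain_sbdry hK, hw, Submodule.subtype_apply]⟩

lemma subsingleton_RH_of_card_lt [Fintype V] (hn : Fintype.card V < n) :
    Subsingleton (RH F K n) := by
  have hface : IsEmpty (Face K n) :=
    ⟨fun σ ↦ (σ.2.2 ▸ card_le_univ σ.1).not_gt hn⟩
  have hchain : Subsingleton (SChain F K n) :=
    inferInstanceAs (Subsingleton (Face K n →₀ F))
  exact (Submodule.mkQ_surjective _).subsingleton

lemma subsingleton_RH_of_relLeray_le [Fintype V] {X Y : Set (Finset V)} {σ : Finset V}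
    (hσ : σ ∈ Y) {i : ℕ} (hi : relLeray F X Y ≤ i) :
    Subsingleton (RH F (induce X σᶜ) (i + 1)) :=
  Nat.sInf_mem (s := {d | ∀ σ ∈ Y, ∀ i : ℕ, d ≤ i → Subsingleton (RH F (induce X σᶜ) (i + 1))})
    ⟨Fintype.card V, fun _ _ _ hi ↦ subsingleton_RH_of_card_lt (Nat.lt_succ_of_le hi)⟩ σ hσ i hi

end Homology

section Splicing

variable {X Y : Set (Finset V)}

lemma IsComplex.induce (hX : IsComplex X) (S : Finset V) : IsComplex (induce X S) :=
  fun σ hσ τ hτ ↦ ⟨hX σ hσ.1 τ hτ, hτ.trans hσ.2⟩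

lemma cyclesBound_faceSet_induce_of_mem {R : Type*} [CommRing R] [LinearOrder V] {S : Finset V}
    (hX : IsComplex X) (hS : S ∈ X) (n : ℕ) :
    CyclesBound R (faceSet (induce X S) (n + 1)) (faceSet (induce X S) (n + 2)) := by
  obtain rfl | ⟨e, he⟩ := S.eq_empty_or_nonempty
  · have hvoid : faceSet (induce X ∅) (n + 1) = ∅ := Set.eq_empty_of_forall_notMem fun σ hσ ↦ by
      simpa [subset_empty.1 hσ.1.2] using hσ.2
    refine fun z hz _ ↦ ⟨0, Submodule.zero_mem _, ?_⟩
    rw [hvoid, Finsupp.supported_empty, Submodule.mem_bot] at hz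
    rw [hz, map_zero]
  · refine .of_insert_mem e fun σ hσ heσ ↦ ?_
    have hsub : insert e σ ⊆ S := insert_subset he hσ.1.2
    exact ⟨⟨hX S hS _ hsub, hsub⟩, by rw [card_insert_of_notMem heσ, hσ.2]⟩

lemma cyclesBound_induce_compl_of_relLeray_le [Fintype V] [LinearOrder V] {F : Type} [Field F]
    (hX : IsComplex X) (hY : alexDual Y ⊆ X) (α : Finset V) {i : ℕ} (hi : relLeray F X Y ≤ i) :
    CyclesBound F (faceSet (induce X αᶜ) (i + 1)) (faceSet (induce X αᶜ) (i + 2)) := by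
  by_cases hα : α ∈ Y
  · exact cyclesBound_of_subsingleton_RH (hX.induce αᶜ) (subsingleton_RH_of_relLeray_le hα hi)
  · refine cyclesBound_faceSet_induce_of_mem hX (hY ?_) i
    change αᶜᶜ ∉ Y
    rwa [compl_compl]

variable [Fintype V] {M : Matroid V} {d : ℕ}

/-- The `n`-element faces of the complex with the `d`-skeleton of the matroid `M` and the faces of
`X` in higher dimensions, restricted to the vertices outside `α`. -/
def splicedFaces [DecidableEq V] (X : Set (Finset V)) (M : Matroid V) (d : ℕ) (α : Finset V)
    (n : ℕ) : Set (Finset V) :=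
  faceSet (induce (if n ≤ d + 1 then indepComplex M else X) αᶜ) n

lemma splicedFaces_subset [DecidableEq V] (hMX : indepComplex M ⊆ X) (α : Finset V) (n : ℕ) :
    splicedFaces X M d α n ⊆ faceSet (induce X αᶜ) n := by
  refine fun σ hσ ↦ ⟨⟨?_, hσ.1.2⟩, hσ.2⟩
  have hmem := hσ.1.1
  split_ifs at hmem
  · exact hMX hmem
  · exact hmem

lemma cyclesBound_splicedFaces {R : Type*} [CommRing R] [LinearOrder V] {α : Finset V}
    (hMX : indepComplex M ⊆ X) (hM : d < M.eRk (αᶜ : Finset V))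
    (hX : ∀ i, d ≤ i →
      CyclesBound R (faceSet (induce X αᶜ) (i + 1)) (faceSet (induce X αᶜ) (i + 2))) (n : ℕ) :
    CyclesBound R (splicedFaces X M d α n) (splicedFaces X M d α (n + 1)) := by
  obtain hn | hn := le_or_gt n d
  · rw [splicedFaces, splicedFaces, if_pos (by omega), if_pos (by omega)]
    exact cyclesBound_induce_indepComplex M ((Nat.cast_le.2 hn).trans_lt hM)
  · obtain ⟨i, rfl⟩ := Nat.exists_eq_add_one_of_ne_zero hn.ne_bot
    refine (hX i (by omega)).mono (splicedFaces_subset hMX α (i + 1)) ?_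
    rw [splicedFaces, if_neg (by omega)]

theorem isAcyclicCarrier_splicedFaces {R : Type*} [CommRing R] [LinearOrder V]
    (hMX : indepComplex M ⊆ X) (hM : ∀ α ∈ X, d < M.eRk (αᶜ : Finset V))
    (hX : ∀ (α : Finset V) (i : ℕ), d ≤ i →
      CyclesBound R (faceSet (induce X αᶜ) (i + 1)) (faceSet (induce X αᶜ) (i + 2))) :
    IsAcyclicCarrier R X (splicedFaces X M d) where
  subset α n _ hσ := (splicedFaces_subset hMX α n hσ).1.1
  antitone α β hαβ n σ hσ := ⟨⟨hσ.1.1, hσ.1.2.trans (compl_subset_compl.2 hαβ)⟩, hσ.2⟩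
  empty_mem α _ := by
    rw [splicedFaces, if_pos (Nat.zero_le _)]
    exact ⟨⟨by simp [indepComplex], empty_subset _⟩, card_empty⟩
  cyclesBound α hα n := cyclesBound_splicedFaces hMX (hM α hα) (hX α) n

end Splicing

theorem relative_topological_colorful_helly_general
    {V : Type*} [Fintype V] [LinearOrder V] (F : Type) [Field F]
    (X Y : Set (Finset V)) (hX : IsComplex X) (M : Matroid V)
    (hYM : alexDual Y ⊆ indepComplex M) (hMX : indepComplex M ⊆ X) :
    ∃ σ ∈ X, matroidRank M ((↑σ : Set V)ᶜ) ≤ relLeray F X Y := by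
  by_contra! hrank
  have hM : ∀ α ∈ X, relLeray F X Y < M.eRk (αᶜ : Finset V) := fun α hα ↦ by
    rw [coe_compl]
    exact lt_eRk_of_lt_matroidRank (hrank α hα)
  have hcarrier : IsAcyclicCarrier F X (splicedFaces X M (relLeray F X Y)) :=
    isAcyclicCarrier_splicedFaces hMX hM fun α _ hi ↦
      cyclesBound_induce_compl_of_relLeray_le hX (hYM.trans hMX) α hi
  have hempty : ∅ ∈ X := hMX (by simp [indepComplex])
  obtain ⟨v, n, ρ, hρ, hvρ⟩ := hcarrier.exists_mem_singleton hX hempty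
  have hρv : ρ ⊆ {v}ᶜ := hρ.1.2
  simpa using hρv hvρ

/-- **A Relative Topological Colorful Helly Theorem** (Kalai–Meshulam, main theorem).
Let `X, Y` be complexes on the same finite vertex set `V` and let `M` be a matroid with
`Y^∨ ⊆ M ⊆ X` (as complexes).  Then there is a simplex `σ ∈ X` with
`ρ_M(V \ σ) ≤ L_Y(X; F)`. -/
theorem relative_topological_colorful_helly
    {V : Type} [Fintype V] [LinearOrder V] (F : Type) [Field F]
    (X Y : Set (Finset V)) (hX : IsComplex X) (hY : IsComplex Y)
    (M : Matroid V) (hME : M.E = Set.univ)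
    (hYM : alexDual Y ⊆ indepComplex M) (hMX : indepComplex M ⊆ X) :
    ∃ σ ∈ X, matroidRank M ((↑σ : Set V)ᶜ) ≤ relLeray F X Y := by
  exact relative_topological_colorful_helly_general F X Y hX M hYM hMX
end

section
/- Let X and Y be simplicial complexes on the same finite vertex set V. Then L_Y(X;F) = min{d : h̃_i(lk(X,σ);F) = 0 for all i ≥ d and all σ ∈ Y}, where for σ ∉ X the link lk(X,σ) is the void complex (whose reduced homology vanishes in all degrees). -/
open Finset

variable {V : Type*}

/-!
Index the standard basis of `Finset V →₀ R` by finite sets of vertices and let `wedge v` and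
`contract v` be exterior multiplication by `v` and contraction against `v`. The boundary is the
sum of all contractions, so `∂ ∘ wedge v + wedge v ∘ ∂ = 1` and `contract v` anticommutes with `∂`.
Contraction turns chains of `K` into chains of `lk(K, v)`, `wedge v` goes back, and the two
identities give the parts of the long exact sequence of the pair `(K, K \ v)` that are needed:
`h̃ₙ₊₁(K) = 0` and `h̃ₙ(K \ v) = 0` imply `h̃ₙ(lk(K, v)) = 0`, while `h̃ₙ(K) = 0` and
`h̃ₙ(lk(K, v)) = 0` imply `h̃ₙ(K \ v) = 0`.

The vertices of `σ ∈ Y` are then treated one at a time, each step replacing `Y` by `lk(Y, v)` and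
`X` by `lk(X, v)` (to pass from deletions to links) or by `X \ v` (in the other direction).
-/

section Deletion

/-- The deletion `X \ A`, which is `X[V \ A]`, phrased without the complement of `A` so that `V`
may be infinite. -/
def deletion (X : Set (Finset V)) (A : Finset V) : Set (Finset V) :=
  {s | s ∈ X ∧ Disjoint s A}

lemma deletion_subset (X : Set (Finset V)) (A : Finset V) : deletion X A ⊆ X :=
  fun _ hs => hs.1

lemma IsComplex.deletion {X : Set (Finset V)} (hX : IsComplex X) (A : Finset V) :
    IsComplex (deletion X A) :=
  fun s hs t hts => ⟨hX s hs.1 t hts, hs.2.mono_left hts⟩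

@[simp]
lemma deletion_empty (X : Set (Finset V)) : deletion X ∅ = X := by
  simp [deletion]

variable [DecidableEq V]

lemma induce_compl [Fintype V] (X : Set (Finset V)) (A : Finset V) :
    induce X Aᶜ = deletion X A := by
  simp only [induce, deletion, subset_compl_iff_disjoint_right]

lemma deletion_deletion (X : Set (Finset V)) (A B : Finset V) :
    deletion (deletion X A) B = deletion X (A ∪ B) := by
  ext s
  simp only [deletion, Set.mem_ofPred_eq, disjoint_union_right, and_assoc]

lemma IsComplex.link {X : Set (Finset V)} (hX : IsComplex X) (A : Finset V) :
    IsComplex (link X A) :=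
  fun _ hs _ hts => ⟨hX _ hs.1 _ (union_subset_union_left hts), hs.2.mono_left hts⟩

@[simp]
lemma link_empty (X : Set (Finset V)) : link X ∅ = X := by
  simp [link]

lemma link_subset_deletion {X : Set (Finset V)} (hX : IsComplex X) (A : Finset V) :
    link X A ⊆ deletion X A :=
  fun s hs => ⟨hX _ hs.1 s subset_union_left, hs.2⟩

lemma link_link (X : Set (Finset V)) {A B : Finset V} (hAB : Disjoint A B) :
    link (link X A) B = link X (A ∪ B) := by
  ext s
  simp only [link, Set.mem_ofPred_eq, disjoint_union_left, disjoint_union_right, hAB.symm,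
    and_true, union_assoc, union_comm B A, and_assoc]

lemma link_deletion (X : Set (Finset V)) {A B : Finset V} (hAB : Disjoint A B) :
    link (deletion X A) B = deletion (link X B) A := by
  ext s
  simp only [link, deletion, Set.mem_ofPred_eq, disjoint_union_left, hAB.symm, and_true,
    and_right_comm]

lemma mem_link_singleton {X : Set (Finset V)} {v : V} {s : Finset V} :
    s ∈ link X {v} ↔ insert v s ∈ X ∧ v ∉ s := by
  simp [link]

end Deletion

section Operators

variable [LinearOrder V] (R : Type*) [CommRing R]

/-- The sign `(-1) ^ #{y ∈ s | y < x}` that `x` picks up when it is moved to its place in the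
increasing enumeration of `s ∪ {x}`, written as a product so that adding or removing a vertex
of `s` changes one factor. -/
def faceSign (x : V) (s : Finset V) : R :=
  ∏ y ∈ s, if y < x then -1 else 1

lemma faceSign_eq_neg_one_pow (x : V) (s : Finset V) :
    faceSign R x s = (-1) ^ #{y ∈ s | y < x} := by
  simp [faceSign, prod_ite]

lemma faceSign_mul_self (x : V) (s : Finset V) : faceSign R x s * faceSign R x s = 1 := by
  simp [faceSign_eq_neg_one_pow, ← mul_pow]

lemma faceSign_insert_self (x : V) (s : Finset V) : faceSign R x (insert x s) = faceSign R x s := by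
  simp [faceSign]

lemma faceSign_erase_self (x : V) (s : Finset V) : faceSign R x (s.erase x) = faceSign R x s :=
  prod_erase s (by simp)

lemma faceSign_mul_faceSign_insert {x v : V} {s : Finset V} (hxv : x ≠ v) (hx : x ∈ s)
    (hv : v ∉ s) :
    faceSign R v s * faceSign R x (insert v s) =
      -(faceSign R x s * faceSign R v (s.erase x)) := by
  rw [faceSign, ← mul_prod_erase s _ hx, faceSign, prod_insert hv]
  rcases hxv.lt_or_gt with h | h <;> simp [h, h.not_gt, faceSign, mul_comm]

lemma faceSign_mul_faceSign_erase {x y : V} {s : Finset V} (hxy : x ≠ y) (hx : x ∈ s)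
    (hy : y ∈ s) :
    faceSign R y s * faceSign R x (s.erase y) =
      -(faceSign R x s * faceSign R y (s.erase x)) := by
  rw [faceSign, ← mul_prod_erase s _ hx, faceSign.eq_1 R x s, ← mul_prod_erase s _ hy]
  rcases hxy.lt_or_gt with h | h <;> simp [h, h.not_gt, faceSign, mul_comm]

/-- Exterior multiplication by the vertex `v`, i.e. the cone with apex `v`. -/
noncomputable def wedge (v : V) : (Finset V →₀ R) →ₗ[R] (Finset V →₀ R) :=
  Finsupp.linearCombination R fun s =>
    if v ∈ s then 0 else Finsupp.single (insert v s) (faceSign R v s)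

/-- Contraction against the vertex `v`, i.e. the `v`-th summand of the boundary. -/
noncomputable def contract (v : V) : (Finset V →₀ R) →ₗ[R] (Finset V →₀ R) :=
  Finsupp.linearCombination R fun s =>
    if v ∈ s then Finsupp.single (s.erase v) (faceSign R v s) else 0

/-- The boundary operator on formal combinations of all finite vertex sets. Chains of every
complex and every dimension live in this one module, and the empty face is sent to `0`. -/
noncomputable def boundary : (Finset V →₀ R) →ₗ[R] (Finset V →₀ R) :=
  Finsupp.linearCombination R fun s => ∑ x ∈ s, contract R x (Finsupp.single s 1)

variable {R}

lemma wedge_single (v : V) (s : Finset V) (a : R) :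
    wedge R v (Finsupp.single s a) =
      if v ∈ s then 0 else Finsupp.single (insert v s) (a * faceSign R v s) := by
  simp [wedge, smul_ite]

lemma contract_single (v : V) (s : Finset V) (a : R) :
    contract R v (Finsupp.single s a) =
      if v ∈ s then Finsupp.single (s.erase v) (a * faceSign R v s) else 0 := by
  simp [contract, smul_ite]

lemma boundary_single_of_subset {s T : Finset V} (hsT : s ⊆ T) (a : R) :
    boundary R (Finsupp.single s a) = ∑ x ∈ T, contract R x (Finsupp.single s a) := by
  rw [← sum_subset hsT fun x _ hx => by rw [contract_single, if_neg hx]]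
  simp [boundary, smul_sum, ← map_smul]

lemma contract_wedge_self (v : V) (c : Finset V →₀ R) :
    contract R v (wedge R v c) + wedge R v (contract R v c) = c := by
  induction c using Finsupp.induction_linear with
  | zero => simp
  | add c d hc hd => simpa only [map_add, add_add_add_comm] using congrArg₂ (· + ·) hc hd
  | single s a =>
    by_cases hv : v ∈ s <;>
      simp [wedge_single, contract_single, hv, faceSign_insert_self, faceSign_erase_self,
        mul_assoc, faceSign_mul_self, insert_erase, -Finsupp.single_mul]

lemma contract_wedge_of_ne {x v : V} (hxv : x ≠ v) (c : Finset V →₀ R) :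
    contract R x (wedge R v c) = -wedge R v (contract R x c) := by
  induction c using Finsupp.induction_linear with
  | zero => simp
  | add c d hc hd => simp only [map_add, hc, hd, neg_add]
  | single s a =>
    by_cases hx : x ∈ s; swap
    · by_cases hv : v ∈ s <;> simp [wedge_single, contract_single, hx, hv, hxv, -Finsupp.single_mul]
    by_cases hv : v ∈ s
    · simp [wedge_single, contract_single, hx, hv, hxv.symm, -Finsupp.single_mul]
    rw [wedge_single, if_neg hv, contract_single, if_pos (mem_insert_of_mem hx),
      contract_single, if_pos hx, wedge_single, if_neg fun h => hv (mem_of_mem_erase h),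
      erase_insert_of_ne hxv.symm, ← Finsupp.single_neg, mul_assoc, mul_assoc,
      faceSign_mul_faceSign_insert R hxv hx hv, mul_neg]

lemma contract_contract (x y : V) (c : Finset V →₀ R) :
    contract R x (contract R y c) = -contract R y (contract R x c) := by
  induction c using Finsupp.induction_linear with
  | zero => simp
  | add c d hc hd => simp only [map_add, hc, hd, neg_add]
  | single s a =>
    rcases eq_or_ne x y with rfl | hxy
    · by_cases hx : x ∈ s <;> simp [contract_single, hx, -Finsupp.single_mul]
    by_cases hx : x ∈ s; swap
    · by_cases hy : y ∈ s <;> simp [contract_single, hx, hy, -Finsupp.single_mul]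
    by_cases hy : y ∈ s; swap
    · simp [contract_single, hx, hy, -Finsupp.single_mul]
    rw [contract_single y, if_pos hy, contract_single x, if_pos (mem_erase.2 ⟨hxy, hx⟩),
      contract_single x, if_pos hx, contract_single y, if_pos (mem_erase.2 ⟨hxy.symm, hy⟩),
      erase_right_comm, ← Finsupp.single_neg, mul_assoc, mul_assoc,
      faceSign_mul_faceSign_erase R hxy hx hy, mul_neg]

theorem boundary_wedge (v : V) (c : Finset V →₀ R) :
    boundary R (wedge R v c) = c - wedge R v (boundary R c) := by
  induction c using Finsupp.induction_linear with
  | zero => simp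
  | add c d hc hd => simp only [map_add, hc, hd, add_sub_add_comm]
  | single s a =>
    have hwedge : boundary R (wedge R v (Finsupp.single s a)) =
        ∑ x ∈ insert v s, contract R x (wedge R v (Finsupp.single s a)) := by
      rw [wedge_single]
      split_ifs with hv
      · simp
      · exact boundary_single_of_subset subset_rfl _
    rw [hwedge, boundary_single_of_subset (subset_insert v s), map_sum, eq_sub_iff_add_eq,
      ← sum_add_distrib, sum_eq_single_of_mem v (mem_insert_self v s), contract_wedge_self]
    intro x _ hxv
    rw [contract_wedge_of_ne hxv, neg_add_cancel]

theorem boundary_contract (v : V) (c : Finset V →₀ R) :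
    boundary R (contract R v c) = -contract R v (boundary R c) := by
  induction c using Finsupp.induction_linear with
  | zero => simp
  | add c d hc hd => simp only [map_add, hc, hd, neg_add]
  | single s a =>
    have hcontract : boundary R (contract R v (Finsupp.single s a)) =
        ∑ x ∈ s, contract R x (contract R v (Finsupp.single s a)) := by
      rw [contract_single]
      split_ifs with hv
      · exact boundary_single_of_subset (erase_subset v s) _
      · simp
    rw [hcontract, boundary_single_of_subset subset_rfl, map_sum, ← sum_neg_distrib]
    exact sum_congr rfl fun x _ => contract_contract x v _

end Operators

section Chains

variable (R : Type*) [CommRing R]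

/-- The chains of `X` in dimension `n - 1`, as a submodule of the formal combinations of all
finite vertex sets. -/
def chains (X : Set (Finset V)) (n : ℕ) : Submodule R (Finset V →₀ R) :=
  Finsupp.supported R R {s | s ∈ X ∧ #s = n}

variable {R} {X Y : Set (Finset V)} {v : V} {n : ℕ} {c : Finset V →₀ R}

lemma chains_mono (h : X ⊆ Y) (n : ℕ) : chains R X n ≤ chains R Y n :=
  Finsupp.supported_mono fun _ hs => ⟨h hs.1, hs.2⟩

lemma single_mem_chains {s : Finset V} (hs : s ∈ X) (hn : #s = n) (a : R) :
    Finsupp.single s a ∈ chains R X n :=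
  Finsupp.single_mem_supported R a ⟨hs, hn⟩

lemma map_mem_of_mem_chains {M : Type*} [AddCommGroup M] [Module R M] {p : Submodule R M}
    {f : (Finset V →₀ R) →ₗ[R] M}
    (hf : ∀ s ∈ X, #s = n → f (Finsupp.single s 1) ∈ p) (hc : c ∈ chains R X n) : f c ∈ p := by
  suffices chains R X n ≤ p.comap f from this hc
  rw [chains, Finsupp.supported_eq_span_single, Submodule.span_le]
  rintro _ ⟨s, hs, rfl⟩
  exact hf s hs.1 hs.2

variable [LinearOrder V]

lemma wedge_mem_chains (hc : c ∈ chains R (link X {v}) n) : wedge R v c ∈ chains R X (n + 1) := by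
  refine map_mem_of_mem_chains (fun s hs hn => ?_) hc
  obtain ⟨hvs, hv⟩ := mem_link_singleton.1 hs
  rw [wedge_single, if_neg hv]
  exact single_mem_chains hvs (by rw [card_insert_of_notMem hv, hn]) _

lemma contract_mem_chains (hc : c ∈ chains R X (n + 1)) :
    contract R v c ∈ chains R (link X {v}) n := by
  refine map_mem_of_mem_chains (fun s hs hn => ?_) hc
  rw [contract_single]
  split_ifs with hv
  · refine single_mem_chains (mem_link_singleton.2 ⟨?_, notMem_erase v s⟩) ?_ _
    · rwa [insert_erase hv]
    · rw [card_erase_of_mem hv, hn, Nat.add_sub_cancel]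
  · exact zero_mem _

lemma contract_wedge_mem_chains (hc : c ∈ chains R X n) :
    contract R v (wedge R v c) ∈ chains R (deletion X {v}) n := by
  refine map_mem_of_mem_chains (f := contract R v ∘ₗ wedge R v) (fun s hs hn => ?_) hc
  by_cases hv : v ∈ s
  · simp [wedge_single, hv]
  · have hsingle : contract R v (wedge R v (Finsupp.single s 1)) = Finsupp.single s 1 := by
      simpa [contract_single, hv] using contract_wedge_self v (Finsupp.single s (1 : R))
    rw [LinearMap.comp_apply, hsingle]
    exact single_mem_chains (X := deletion X {v}) ⟨hs, disjoint_singleton_right.2 hv⟩ hn _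

lemma contract_eq_zero_of_mem_chains_deletion (hc : c ∈ chains R (deletion X {v}) n) :
    contract R v c = 0 := by
  refine (Submodule.mem_bot R).1 (map_mem_of_mem_chains (fun s hs _ => ?_) hc)
  rw [contract_single, if_neg (disjoint_singleton_right.1 hs.2)]
  exact zero_mem _

end Chains

section Acyclic

variable [LinearOrder V] (R : Type*) [CommRing R]

/-- Vanishing of `h̃_{n-1}(X; R)`: every chain of `X` in dimension `n - 1` with zero boundary is the
boundary of a chain of `X`. -/
def AcyclicAt (X : Set (Finset V)) (n : ℕ) : Prop :=
  ∀ z ∈ chains R X n, boundary R z = 0 → ∃ w ∈ chains R X (n + 1), boundary R w = z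

/-- Vanishing of `h̃_i(X; R)` for all `i ≥ d - 1`, the shift being that of `AcyclicAt`. -/
def AcyclicFrom (X : Set (Finset V)) (d : ℕ) : Prop :=
  ∀ n, d ≤ n → AcyclicAt R X n

variable {R} {X Y : Set (Finset V)} {v : V} {n d : ℕ}

theorem AcyclicAt.link_singleton (hX : IsComplex X) (h : AcyclicAt R X (n + 1))
    (hdel : AcyclicAt R (deletion X {v}) n) : AcyclicAt R (link X {v}) n := by
  intro z hz hz0
  have hzdel : z ∈ chains R (deletion X {v}) n := chains_mono (link_subset_deletion hX {v}) n hz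
  obtain ⟨w, hw, hwz⟩ := hdel z hzdel hz0
  -- The cone over `z` and the filling `w` of `z` away from `v` glue to a cycle of `X`.
  obtain ⟨u, hu, huz⟩ := h (wedge R v z - w)
    (sub_mem (wedge_mem_chains hz) (chains_mono (deletion_subset X {v}) _ hw))
    (by rw [map_sub, boundary_wedge, hz0, hwz, map_zero, sub_zero, sub_self])
  refine ⟨-contract R v u, neg_mem (contract_mem_chains hu), ?_⟩
  calc boundary R (-contract R v u) = contract R v (wedge R v z - w) := by
        rw [map_neg, boundary_contract, neg_neg, huz]
    _ = contract R v (wedge R v z) + wedge R v (contract R v z) := by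
        rw [map_sub, contract_eq_zero_of_mem_chains_deletion hw,
          contract_eq_zero_of_mem_chains_deletion hzdel, map_zero, sub_zero, add_zero]
    _ = z := contract_wedge_self v z

theorem AcyclicAt.deletion_singleton (hX : IsComplex X) (h : AcyclicAt R X n)
    (hlink : AcyclicAt R (link X {v}) n) : AcyclicAt R (deletion X {v}) n := by
  intro z hz hz0
  obtain ⟨u, hu, huz⟩ := h z (chains_mono (deletion_subset X {v}) n hz) hz0
  have hu0 : boundary R (contract R v u) = 0 := by
    rw [boundary_contract, huz, contract_eq_zero_of_mem_chains_deletion hz, neg_zero]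
  obtain ⟨w, hw, hwu⟩ := hlink (contract R v u) (contract_mem_chains hu) hu0
  -- The part of `u` through `v` is the cone over `contract v u`; replace it by `w`.
  refine ⟨contract R v (wedge R v u) + w, add_mem (contract_wedge_mem_chains hu)
    (chains_mono (link_subset_deletion hX {v}) _ hw), ?_⟩
  calc boundary R (contract R v (wedge R v u) + w)
      = boundary R (u - wedge R v (contract R v u)) + boundary R w := by
        rw [map_add, ← eq_sub_of_add_eq (contract_wedge_self v u)]
    _ = z := by
        rw [map_sub, boundary_wedge, hu0, huz, hwu, map_zero, sub_zero, sub_add_cancel]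

theorem AcyclicFrom.link_of_forall_deletion (hX : IsComplex X) (hY : IsComplex Y)
    (h : ∀ σ ∈ Y, AcyclicFrom R (deletion X σ) d) {σ : Finset V} (hσ : σ ∈ Y) :
    AcyclicFrom R (link X σ) d := by
  induction σ using Finset.induction_on generalizing X Y with
  | empty => simpa using h ∅ hσ
  | insert v B hv ih =>
    rw [insert_eq, ← link_link X (disjoint_singleton_left.2 hv)]
    refine ih (hX.link {v}) (hY.link {v}) (fun A hA n hn => ?_) (mem_link_singleton.2 ⟨hσ, hv⟩)
    obtain ⟨hvA, hvnA⟩ := mem_link_singleton.1 hA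
    rw [← link_deletion X (disjoint_singleton_right.2 hvnA)]
    refine AcyclicAt.link_singleton (hX.deletion A)
      (h A (hY _ hvA A (subset_insert v A)) (n + 1) (by lia)) ?_
    rw [deletion_deletion, union_comm, ← insert_eq]
    exact h (insert v A) hvA n hn

theorem AcyclicFrom.deletion_of_forall_link (hX : IsComplex X) (hY : IsComplex Y)
    (h : ∀ σ ∈ Y, AcyclicFrom R (link X σ) d) {σ : Finset V} (hσ : σ ∈ Y) :
    AcyclicFrom R (deletion X σ) d := by
  induction σ using Finset.induction_on generalizing X Y with
  | empty => simpa using h ∅ hσ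
  | insert v B hv ih =>
    rw [insert_eq, ← deletion_deletion]
    refine ih (hX.deletion {v}) (hY.link {v}) (fun A hA n hn => ?_)
      (mem_link_singleton.2 ⟨hσ, hv⟩)
    obtain ⟨hvA, hvnA⟩ := mem_link_singleton.1 hA
    rw [link_deletion X (disjoint_singleton_left.2 hvnA)]
    refine AcyclicAt.deletion_singleton (hX.link A)
      (h A (hY _ hvA A (subset_insert v A)) n hn) ?_
    rw [link_link X (disjoint_singleton_right.2 hvnA), union_comm, ← insert_eq]
    exact h (insert v A) hvA n hn

end Acyclic

section ReducedHomology

variable (F : Type) [Field F]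

/-- The inclusion of the chains on the faces of `X` into the formal combinations of all finite
vertex sets. -/
noncomputable def SChain.incl (X : Set (Finset V)) (n : ℕ) : SChain F X n →ₗ[F] (Finset V →₀ F) :=
  Finsupp.lmapDomain F F (Subtype.val : Face X n → Finset V)

variable {F} {X : Set (Finset V)}

lemma SChain.incl_single {n : ℕ} (σ : Face X n) (a : F) :
    SChain.incl F X n (Finsupp.single σ a : Face X n →₀ F) = Finsupp.single σ.1 a :=
  Finsupp.mapDomain_single

lemma SChain.incl_injective (n : ℕ) : Function.Injective (SChain.incl F X n) :=
  Finsupp.mapDomain_injective Subtype.val_injective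

lemma SChain.range_incl (X : Set (Finset V)) (n : ℕ) :
    LinearMap.range (SChain.incl F X n) = chains F X n := by
  have hfaces : Set.range (Subtype.val : Face X n → Finset V) = {s | s ∈ X ∧ #s = n} :=
    Subtype.range_coe
  rw [chains, ← hfaces, ← Set.image_univ, ← Finsupp.lmapDomain_supported, Finsupp.supported_univ]
  exact LinearMap.range_eq_map _

variable [LinearOrder V]

lemma SChain.incl_bdryElem (hX : IsComplex X) {n : ℕ} (σ : Face X (n + 1)) :
    SChain.incl F X n (bdryElem F X n σ) = boundary F (Finsupp.single σ.1 1) := by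
  rw [bdryElem, map_sum, boundary_single_of_subset subset_rfl,
    ← sum_attach σ.1 fun x => contract F x _]
  refine sum_congr rfl fun x _ => ?_
  have hx : σ.1.erase x ∈ X := hX σ.1 σ.2.1 _ (erase_subset _ _)
  calc SChain.incl F X n _
      = SChain.incl F X n ((-1 : F) ^ #{y ∈ σ.1 | y < x.1} • (Finsupp.single
          ⟨σ.1.erase x, hx, by rw [card_erase_of_mem x.2, σ.2.2, Nat.add_sub_cancel]⟩ 1 :
            Face X n →₀ F)) := congrArg _ (dif_pos hx)
    _ = (-1 : F) ^ #{y ∈ σ.1 | y < x.1} • Finsupp.single (σ.1.erase x) 1 :=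
        ((SChain.incl F X n).map_smul _ _).trans (congrArg _ (SChain.incl_single _ _))
    _ = contract F x.1 (Finsupp.single σ.1 1) := by
        rw [contract_single, if_pos x.2, faceSign_eq_neg_one_pow, Finsupp.smul_single, smul_eq_mul,
          mul_comm]

theorem SChain.incl_sbdry (hX : IsComplex X) {n : ℕ} (c : SChain F X (n + 1)) :
    SChain.incl F X n (sbdry F X n c) = boundary F (SChain.incl F X (n + 1) c) := by
  suffices SChain.incl F X n ∘ₗ sbdry F X n = boundary F ∘ₗ SChain.incl F X (n + 1) from
    LinearMap.congr_fun this c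
  refine Finsupp.lhom_ext' fun σ => LinearMap.ext_ring ?_
  have hsbdry : sbdry F X n (Finsupp.single σ 1 : Face X (n + 1) →₀ F) = bdryElem F X n σ :=
    (Finsupp.lsum_single F _ σ 1).trans (one_smul F _)
  calc SChain.incl F X n (sbdry F X n (Finsupp.single σ 1 : Face X (n + 1) →₀ F))
      = boundary F (Finsupp.single σ.1 1) := by rw [hsbdry, SChain.incl_bdryElem hX]
    _ = boundary F (SChain.incl F X (n + 1) (Finsupp.single σ 1 : Face X (n + 1) →₀ F)) := by
        rw [SChain.incl_single]

lemma mem_scyc_iff (hX : IsComplex X) {n : ℕ} {c : SChain F X n} :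
    c ∈ scyc F X n ↔ boundary F (SChain.incl F X n c) = 0 := by
  cases n with
  | zero =>
    have hc : SChain.incl F X 0 c ∈ chains F X 0 := (SChain.range_incl X 0).le ⟨c, rfl⟩
    refine iff_of_true Submodule.mem_top ((Submodule.mem_bot F).1 (map_mem_of_mem_chains ?_ hc))
    intro s _ hs
    simp [card_eq_zero.1 hs, boundary_single_of_subset subset_rfl]
  | succ n =>
    rw [← SChain.incl_sbdry hX, map_eq_zero_iff _ (SChain.incl_injective n)]
    exact LinearMap.mem_ker

theorem subsingleton_RH_iff_acyclicAt (hX : IsComplex X) {n : ℕ} :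
    Subsingleton (RH F X n) ↔ AcyclicAt F X n := by
  have hboundary (c : SChain F X n) : c ∈ LinearMap.range (sbdry F X n) ↔
      ∃ w ∈ chains F X (n + 1), boundary F w = SChain.incl F X n c := by
    simp only [← SChain.range_incl, LinearMap.mem_range, exists_exists_eq_and,
      ← SChain.incl_sbdry hX, (SChain.incl_injective n).eq_iff]
  rw [Submodule.Quotient.subsingleton_iff, Submodule.comap_subtype_eq_top, SetLike.le_def]
  simp only [AcyclicAt, ← SChain.range_incl X n, LinearMap.mem_range, forall_exists_index,
    forall_apply_eq_imp_iff, ← mem_scyc_iff hX, ← hboundary]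

theorem acyclicFrom_succ_iff (hX : IsComplex X) {d : ℕ} :
    AcyclicFrom F X (d + 1) ↔ ∀ i, d ≤ i → Subsingleton (RH F X (i + 1)) := by
  simp only [subsingleton_RH_iff_acyclicAt hX]
  refine ⟨fun h i hi => h (i + 1) (by lia), fun h n hn => ?_⟩
  obtain ⟨i, rfl⟩ := Nat.exists_eq_add_of_le' (Nat.one_le_of_lt hn)
  exact h i (by lia)

end ReducedHomology

theorem relLeray_eq_via_links_general {V : Type*} [LinearOrder V] (F : Type) [Field F]
    {X Y : Set (Finset V)} (hX : IsComplex X) (hY : IsComplex Y) (d : ℕ) :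
    (∀ σ ∈ Y, ∀ i : ℕ, d ≤ i → Subsingleton (RH F (deletion X σ) (i + 1))) ↔
      ∀ σ ∈ Y, ∀ i : ℕ, d ≤ i → Subsingleton (RH F (link X σ) (i + 1)) := by
  simp only [← acyclicFrom_succ_iff (hX.deletion _), ← acyclicFrom_succ_iff (hX.link _)]
  exact ⟨fun h _ => AcyclicFrom.link_of_forall_deletion hX hY h,
    fun h _ => AcyclicFrom.deletion_of_forall_link hX hY h⟩

/-- **Relative Leray numbers via links** (Proposition 2.1).
For complexes `X, Y` on the same finite vertex set `V`,
`L_Y(X; F) = min{d : h̃_i(lk(X,σ); F) = 0 for all i ≥ d and all σ ∈ Y}`.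
(If `σ ∉ X` then `lk(X,σ)` is the void complex, all of whose reduced homology vanishes.) -/
theorem relLeray_eq_via_links
    {V : Type} [Fintype V] [LinearOrder V] (F : Type) [Field F]
    (X Y : Set (Finset V)) (hX : IsComplex X) (hY : IsComplex Y) :
    relLeray F X Y =
      sInf {d | ∀ σ ∈ Y, ∀ i : ℕ, d ≤ i → Subsingleton (RH F (link X σ) (i + 1))} := by
  simp only [relLeray, induce_compl, relLeray_eq_via_links_general F hX hY]
end
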